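/- For every d ≥ 3, the number of minimal permutations with d descents of length d+3 satisfies p_{d+3,d} = 3^{d+3} − (d² + 4d + 7)·2^{d+2} + (1/2)d⁴ + (5/2)d³ + 5d² + 6d + 1. -/

import Mathlib

/-- The number of descents of a word (list of naturals), i.e. the number of
positions `i` (0-indexed) with `l[i] > l[i+1]`. -/
def descents (l : List ℕ) : ℕ :=
  ((List.range (l.length - 1)).filter (fun i => l.getD (i + 1) 0 < l.getD i 0)).length

/-- `l` is a minimal permutation (word) with `d` descents: it has exactly `d`
descents and deleting any one entry yields a word with `d - 1` descents. -/
def IsMinimal (d : ℕ) (l : List ℕ) : Prop :=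
  descents l = d ∧ ∀ i < l.length, descents (l.eraseIdx i) = d - 1

/-!
If deleting either endpoint of an ascent lowers the number of descents, then the entries around that
ascent form a pattern `2143` or `3142`. Hence a permutation of length `d + 3` with `d` descents,
which has exactly three decreasing runs, is minimal if and only if the entries around each of its
two ascents form such a pattern. Replacing each value, in increasing order, by the index of the run
that contains it encodes these permutations by words over three letters. For either ascent, the
pattern condition on the encoding word is recognised by an automaton with six states whose only
cycles are loops, so counting the words accepted by both automata amounts to solving a triangular
linear recurrence, which yields a combination of `3 ^ n`, `2 ^ n` and powers of `n`.
-/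

section Descents

variable {A B C : List ℕ}

theorem descents_singleton (a : ℕ) : descents [a] = 0 := rfl

theorem descents_cons_cons (a b : ℕ) (l : List ℕ) :
    descents (a :: b :: l) = (if b < a then 1 else 0) + descents (b :: l) := by
  by_cases h : b < a <;>
    simp [descents, List.range_succ_eq_map, List.filter_map, Function.comp_def, h, add_comm]

theorem descents_append_cons_cons (A B : List ℕ) (a b : ℕ) :
    descents (A ++ a :: b :: B) =
      descents (A ++ [a]) + (if b < a then 1 else 0) + descents (b :: B) := by
  induction A with
  | nil => simp [descents_cons_cons, descents_singleton]
  | cons c A ih =>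
    cases A with
    | nil => simp [descents_cons_cons, descents_singleton, add_assoc]
    | cons c' A =>
      simp only [List.cons_append] at ih ⊢
      rw [descents_cons_cons, ih, descents_cons_cons]
      ring

theorem descents_append_of_le (h : ∀ a ∈ A.getLast?, ∀ b ∈ B.head?, a ≤ b) :
    descents (A ++ B) = descents A + descents B := by
  rcases A.eq_nil_or_concat' with rfl | ⟨A, a, rfl⟩
  · simp [show descents [] = 0 from rfl]
  cases B with
  | nil => simp [show descents [] = 0 from rfl]
  | cons b B =>
    have hab : a ≤ b := by simpa using h
    simp [descents_append_cons_cons, hab.not_gt]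

theorem descents_append_of_lt {a b : ℕ} (ha : a ∈ A.getLast?) (hb : b ∈ B.head?) (h : b < a) :
    descents (A ++ B) = descents A + descents B + 1 := by
  obtain ⟨A, rfl⟩ := List.getLast?_eq_some_iff.1 ha
  obtain ⟨B, rfl⟩ := List.head?_eq_some_iff.1 hb
  rw [List.append_assoc, List.singleton_append, descents_append_cons_cons, if_pos h]
  ring

theorem descents_add_descents_le (A B : List ℕ) :
    descents A + descents B ≤ descents (A ++ B) := by
  by_cases h : ∀ a ∈ A.getLast?, ∀ b ∈ B.head?, a ≤ b
  · exact (descents_append_of_le h).ge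
  · push Not at h
    obtain ⟨a, ha, b, hb, hba⟩ := h
    rw [descents_append_of_lt ha hb hba]
    exact Nat.le_succ _

theorem descents_append_le (A B : List ℕ) :
    descents (A ++ B) ≤ descents A + descents B + 1 := by
  by_cases h : ∀ a ∈ A.getLast?, ∀ b ∈ B.head?, a ≤ b
  · exact (descents_append_of_le h).le.trans (Nat.le_succ _)
  · push Not at h
    obtain ⟨a, ha, b, hb, hba⟩ := h
    exact (descents_append_of_lt ha hb hba).le

theorem descents_add_one_of_sortedGT (hA : A.SortedGT) (hne : A ≠ []) :
    descents A + 1 = A.length := by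
  induction A with
  | nil => contradiction
  | cons a A ih =>
    cases A with
    | nil => rfl
    | cons b A =>
      have hba : b < a := List.rel_of_pairwise_cons hA.pairwise List.mem_cons_self
      rw [descents_cons_cons, if_pos hba, add_assoc, ih hA.pairwise.of_cons.sortedGT (by simp),
        List.length_cons (as := b :: A), add_comm]

theorem descents_flatten_add_length {L : List (List ℕ)} (hne : [] ∉ L)
    (hsort : ∀ A ∈ L, A.SortedGT)
    (hjoin : L.IsChain fun A B => ∀ a ∈ A.getLast?, ∀ b ∈ B.head?, a ≤ b) :
    descents L.flatten + L.length = L.flatten.length := by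
  induction L with
  | nil => rfl
  | cons A L ih =>
    rw [List.mem_cons, not_or] at hne
    rw [List.forall_mem_cons] at hsort
    have hle : ∀ a ∈ A.getLast?, ∀ b ∈ L.flatten.head?, a ≤ b := by
      cases L with
      | nil => simp
      | cons B L =>
        have hB : B ≠ [] := fun h => hne.2 (h ▸ List.mem_cons_self)
        rw [List.flatten_cons, List.head?_append_of_ne_nil _ hB]
        exact hjoin.rel
    have hA := descents_add_one_of_sortedGT hsort.1 (Ne.symm hne.1)
    have hL := ih hne.2 hsort.2 hjoin.tail
    rw [List.flatten_cons, descents_append_of_le hle, List.length_append, List.length_cons]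
    lia

theorem descents_add_length_splitBy (l : List ℕ) :
    descents l + (l.splitBy (· > ·)).length = l.length := by
  have h := descents_flatten_add_length (List.nil_notMem_splitBy (· > ·) l)
    (fun A hA => List.sortedGT_iff_isChain.2 <| by simpa using List.isChain_of_mem_splitBy hA)
    ((List.isChain_getLast_head_splitBy (· > ·) l).imp fun A B ⟨hA, hB, h⟩ => by
      simpa [List.getLast?_eq_some_getLast hA, List.head?_eq_some_head hB] using h)
  rwa [List.flatten_splitBy] at h

end Descents

section Overlap

variable {A B C : List ℕ}

/-- The last entry of `A` is smaller than the first entry of `B`, so that the junction of the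
word `A ++ B` is an ascent; in particular both `A` and `B` are nonempty. -/
def Ascends (A B : List ℕ) : Prop :=
  ∃ a ∈ A.getLast?, ∃ b ∈ B.head?, a < b

theorem not_ascends_nil_left : ¬ Ascends [] B := by
  simp [Ascends]

theorem not_ascends_nil_right : ¬ Ascends A [] := by
  simp [Ascends]

theorem Ascends.left_ne_nil (h : Ascends A B) : A ≠ [] := by
  rintro rfl
  exact not_ascends_nil_left h

theorem Ascends.right_ne_nil (h : Ascends A B) : B ≠ [] := by
  rintro rfl
  exact not_ascends_nil_right h

theorem Ascends.le (h : Ascends A B) : ∀ a ∈ A.getLast?, ∀ b ∈ B.head?, a ≤ b := by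
  obtain ⟨a, ha, b, hb, hab⟩ := h
  intro x hx y hy
  rw [Option.mem_unique hx ha, Option.mem_unique hy hb]
  exact hab.le

theorem ascends_append_right (hB : B ≠ []) : Ascends A (B ++ C) ↔ Ascends A B := by
  simp [Ascends, List.head?_append_of_ne_nil _ hB]

theorem ascends_append_left (hB : B ≠ []) : Ascends (A ++ B) C ↔ Ascends B C := by
  simp [Ascends, List.getLast?_append_of_ne_nil _ hB]

theorem ascends_of_nodup (hAB : (A ++ B).Nodup) (hA : A ≠ []) (hB : B ≠ [])
    (h : ∀ a ∈ A.getLast?, ∀ b ∈ B.head?, a ≤ b) : Ascends A B := by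
  have ha := List.getLast?_eq_some_getLast hA
  have hb := List.head?_eq_some_head hB
  exact ⟨_, ha, _, hb, (h _ ha _ hb).lt_of_ne
    ((List.nodup_append.1 hAB).2.2 _ (List.getLast_mem hA) _ (List.head_mem hB))⟩

theorem ascends_of_descents_append_le (hAB : (A ++ B).Nodup) (hA : A ≠ []) (hB : B ≠ [])
    (h : descents (A ++ B) ≤ descents A + descents B) : Ascends A B := by
  refine ascends_of_nodup hAB hA hB fun a ha b hb => ?_
  by_contra! hba
  rw [descents_append_of_lt ha hb hba] at h
  lia

/-- The four entries of `A ++ B` around its junction form a pattern `2143` or `3142` (provided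
that the last two entries of `A` and the first two of `B` are decreasing). Minimality
of a word forces this pattern around each ascent. -/
def Overlap (A B : List ℕ) : Prop :=
  Ascends A B.tail ∧ Ascends A.dropLast B

theorem overlap_append_right (hB : 1 < B.length) : Overlap A (B ++ C) ↔ Overlap A B := by
  have hne : B ≠ [] := List.ne_nil_of_length_pos (by lia)
  have hne' : B.tail ≠ [] := List.ne_nil_of_length_pos (by simpa)
  rw [Overlap, Overlap, List.tail_append_of_ne_nil hne, ascends_append_right hne',
    ascends_append_right hne]

theorem overlap_append_left (hB : 1 < B.length) : Overlap (A ++ B) C ↔ Overlap B C := by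
  have hne : B ≠ [] := List.ne_nil_of_length_pos (by lia)
  have hne' : B.dropLast ≠ [] := List.ne_nil_of_length_pos (by simpa)
  rw [Overlap, Overlap, List.dropLast_append_of_ne_nil hne, ascends_append_left hne',
    ascends_append_left hne]

theorem Overlap.ascends (hB : B.SortedGT) (h : Overlap A B) : Ascends A B := by
  obtain ⟨⟨a, ha, b', hb', hab'⟩, -⟩ := h
  cases B with
  | nil => simp at hb'
  | cons b B =>
    have hbb' : b' < b := List.rel_of_pairwise_cons hB.pairwise (List.mem_of_mem_head? hb')
    exact ⟨a, ha, b, rfl, hab'.trans hbb'⟩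

theorem Overlap.ascends_eraseIdx_left (hB : B.SortedGT) (h : Overlap A B) (i : ℕ) :
    Ascends (A.eraseIdx i) B := by
  have hA : (A.eraseIdx i).getLast? = A.getLast? ∨
      (A.eraseIdx i).getLast? = A.dropLast.getLast? := by
    grind
  rcases hA with hA | hA
  · simpa [Ascends, hA] using h.ascends hB
  · simpa [Ascends, hA] using h.2

theorem Overlap.ascends_eraseIdx_right (hB : B.SortedGT) (h : Overlap A B) (i : ℕ) :
    Ascends A (B.eraseIdx i) := by
  rcases B with - | ⟨b, B⟩
  · exact absurd rfl (h.ascends hB).right_ne_nil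
  cases i with
  | zero => exact h.1
  | succ i => simpa [Ascends] using h.ascends hB

theorem splitBy_append_append (hA : A.SortedGT) (hB : B.SortedGT) (hC : C.SortedGT)
    (hAB : Ascends A B) (hBC : Ascends B C) :
    (A ++ (B ++ C)).splitBy (· > ·) = [A, B, C] := by
  have hle : ∀ a ∈ A.getLast?, ∀ b ∈ (B ++ C).head?, a ≤ b :=
    ((ascends_append_right hAB.right_ne_nil).2 hAB).le
  have run {R : List ℕ} (hR : R.SortedGT) (hne : R ≠ []) : R.splitBy (· > ·) = [R] :=
    List.splitBy_of_isChain hne (by simpa using hR.isChain)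
  rw [List.splitBy_append (by simpa using hle), List.splitBy_append (by simpa using hBC.le),
    run hA hAB.left_ne_nil, run hB hAB.right_ne_nil, run hC hBC.right_ne_nil]
  rfl

theorem descents_append_append_add_three (hA : A.SortedGT) (hB : B.SortedGT) (hC : C.SortedGT)
    (hAB : Ascends A B) (hBC : Ascends B C) :
    descents (A ++ (B ++ C)) + 3 = (A ++ (B ++ C)).length := by
  simpa [splitBy_append_append hA hB hC hAB hBC] using descents_add_length_splitBy (A ++ (B ++ C))

end Overlap

section Minimal

variable {A B C l : List ℕ} {d : ℕ}

theorem IsMinimal.descents_append {b : ℕ} (h : IsMinimal d (A ++ b :: B)) :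
    descents (A ++ B) = d - 1 := by
  simpa [List.eraseIdx_append_of_length_le] using h.2 A.length (by simp)

theorem not_isMinimal_of_ascends {b : ℕ} (hd : d ≠ 0) (hAb : Ascends A [b]) (hbB : Ascends [b] B) :
    ¬ IsMinimal d (A ++ b :: B) := by
  intro h
  have hdesc : descents (A ++ ([b] ++ B)) = descents A + descents B := by
    rw [descents_append_of_le ((ascends_append_right (by simp)).2 hAb).le,
      descents_append_of_le hbB.le, descents_singleton, zero_add]
  have hd' : descents (A ++ ([b] ++ B)) = d := h.1
  have := h.descents_append
  have := descents_add_descents_le A B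
  lia

theorem Ascends.overlap_of_isMinimal (hd : d ≠ 0) (hl : (A ++ B).Nodup)
    (hAB : Ascends A B) (h : IsMinimal d (A ++ B)) : Overlap A B := by
  have hdesc : descents A + descents B = d := by rw [← h.1, descents_append_of_le hAB.le]
  constructor
  · obtain ⟨b, B, rfl⟩ := List.exists_cons_of_ne_nil hAB.right_ne_nil
    have hdel : descents (A ++ B) = d - 1 := h.descents_append
    have hle : descents (b :: B) ≤ descents B + 1 := by
      simpa [descents_singleton] using descents_append_le [b] B
    have hge := descents_add_descents_le A B
    have hB : B ≠ [] := by
      rintro rfl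
      rw [List.append_nil] at hdel
      rw [descents_singleton] at hdesc
      lia
    rw [List.tail_cons]
    exact ascends_of_descents_append_le
      (hl.sublist (List.sublist_append_right [b] B |>.append_left A)) hAB.left_ne_nil hB (by lia)
  · obtain ⟨A, a, rfl⟩ := A.eq_nil_or_concat'.resolve_left hAB.left_ne_nil
    rw [List.dropLast_concat]
    have hdel : descents (A ++ B) = d - 1 :=
      IsMinimal.descents_append (b := a) (by simpa using h)
    have hle : descents (A ++ [a]) ≤ descents A + 1 := by
      simpa [descents_singleton] using descents_append_le A [a]
    have hge := descents_add_descents_le A B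
    have hA : A ≠ [] := by
      rintro rfl
      rw [List.nil_append] at hdel
      rw [List.nil_append, descents_singleton] at hdesc
      lia
    exact ascends_of_descents_append_le
      (hl.sublist (List.sublist_append_left A [a] |>.append_right B)) hA hAB.right_ne_nil (by lia)

theorem exists_runs_of_descents_add_three (hl : l.Nodup) (h : descents l + 3 = l.length) :
    ∃ A B C : List ℕ, l = A ++ (B ++ C) ∧ A.SortedGT ∧ B.SortedGT ∧ C.SortedGT ∧
      Ascends A B ∧ Ascends B C := by
  have hlen : (l.splitBy (· > ·)).length = 3 := by
    have := descents_add_length_splitBy l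
    lia
  obtain ⟨A, B, C, hABC⟩ := List.length_eq_three.1 hlen
  obtain ⟨rfl, -, hsort, hjoin⟩ := List.splitBy_eq_iff.1 hABC
  simp only [List.mem_cons, List.not_mem_nil, or_false, forall_eq_or_imp, forall_eq,
    decide_eq_true_eq, ← List.sortedGT_iff_isChain, List.isChain_cons_cons, List.isChain_singleton,
    and_true, List.flatten_cons, List.flatten_nil, List.append_nil] at hsort hjoin hl ⊢
  obtain ⟨⟨hAne, hBne, hAB⟩, ⟨_, hCne, hBC⟩⟩ := hjoin
  simp only [decide_eq_false_iff_not, gt_iff_lt, not_lt] at hAB hBC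
  refine ⟨A, B, C, rfl, hsort.1, hsort.2.1, hsort.2.2, ?_, ?_⟩
  · refine ascends_of_nodup (hl.sublist ?_) hAne hBne ?_
    · exact (List.sublist_append_left B C).append_left A
    · simpa [List.getLast?_eq_some_getLast hAne, List.head?_eq_some_head hBne] using hAB
  · refine ascends_of_nodup (hl.sublist ?_) hBne hCne ?_
    · exact List.sublist_append_right A (B ++ C)
    · simpa [List.getLast?_eq_some_getLast hBne, List.head?_eq_some_head hCne] using hBC

theorem isMinimal_append_append (hlen : (A ++ (B ++ C)).length = d + 3) (hA : A.SortedGT)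
    (hB : B.SortedGT) (hC : C.SortedGT) (hAB : Overlap A B) (hBC : Overlap B C) :
    IsMinimal d (A ++ (B ++ C)) := by
  have erase {R : List ℕ} (hR : R.SortedGT) (i : ℕ) : (R.eraseIdx i).SortedGT :=
    (hR.pairwise.sublist (List.eraseIdx_sublist R i)).sortedGT
  have hAB' := hAB.ascends hB
  have hBC' := hBC.ascends hC
  refine ⟨by have := descents_append_append_add_three hA hB hC hAB' hBC'; lia, fun i hi => ?_⟩
  suffices descents ((A ++ (B ++ C)).eraseIdx i) + 3 = ((A ++ (B ++ C)).eraseIdx i).length by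
    rw [List.length_eraseIdx_of_lt hi, hlen] at this
    lia
  rcases lt_or_ge i A.length with hiA | hiA
  · rw [List.eraseIdx_append_of_lt_length hiA]
    exact descents_append_append_add_three (erase hA i) hB hC
      (hAB.ascends_eraseIdx_left hB i) hBC'
  rw [List.eraseIdx_append_of_length_le hiA]
  rcases lt_or_ge (i - A.length) B.length with hiB | hiB
  · rw [List.eraseIdx_append_of_lt_length hiB]
    exact descents_append_append_add_three hA (erase hB _) hC
      (hAB.ascends_eraseIdx_right hB _) (hBC.ascends_eraseIdx_left hC _)
  · rw [List.eraseIdx_append_of_length_le hiB]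
    exact descents_append_append_add_three hA hB (erase hC _) hAB'
      (hBC.ascends_eraseIdx_right hC _)

theorem IsMinimal.exists_runs (hd : d ≠ 0) (hl : l.Nodup) (hlen : l.length = d + 3)
    (h : IsMinimal d l) :
    ∃ A B C : List ℕ, l = A ++ (B ++ C) ∧ A.SortedGT ∧ B.SortedGT ∧ C.SortedGT ∧
      Overlap A B ∧ Overlap B C := by
  obtain ⟨A, B, C, rfl, hA, hB, hC, hAB, hBC⟩ :=
    exists_runs_of_descents_add_three hl (by rw [h.1, hlen])
  have hBlen : 1 < B.length := by
    obtain ⟨b, B, rfl⟩ := List.exists_cons_of_ne_nil hAB.right_ne_nil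
    rw [List.length_cons, Nat.lt_add_left_iff_pos, List.length_pos_iff]
    rintro rfl
    exact not_isMinimal_of_ascends hd hAB hBC h
  refine ⟨A, B, C, rfl, hA, hB, hC, ?_, ?_⟩
  · rw [← overlap_append_right hBlen]
    exact ((ascends_append_right hAB.right_ne_nil).2 hAB).overlap_of_isMinimal hd hl h
  · rw [← List.append_assoc] at hl h
    rw [← overlap_append_left hBlen]
    exact ((ascends_append_left hBC.left_ne_nil).2 hBC).overlap_of_isMinimal hd hl h

end Minimal

section Positions

variable {α : Type*} [DecidableEq α]

/-- The positions of the letter `x` in the word `w`, in decreasing order. Positions are counted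
from the end of the word, so that prepending a letter does not shift them. -/
def positions (x : α) : List α → List ℕ
  | [] => []
  | y :: w => if y = x then w.length :: positions x w else positions x w

theorem mem_positions {x : α} {w : List α} {k : ℕ} :
    k ∈ positions x w ↔ w.reverse[k]? = some x := by
  induction w with
  | nil => simp [positions]
  | cons y w ih =>
    have hlt : k ∈ positions x w → k < w.length := by
      rw [ih]
      grind
    grind [positions]

theorem lt_length_of_mem_positions {x : α} {w : List α} {k : ℕ} (hk : k ∈ positions x w) :
    k < w.length := by
  obtain ⟨h, -⟩ := List.getElem?_eq_some_iff.1 (mem_positions.1 hk)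
  simpa using h

theorem sortedGT_positions (x : α) (w : List α) : (positions x w).SortedGT := by
  induction w with
  | nil => exact List.Pairwise.nil.sortedGT
  | cons y w ih =>
    rw [positions]
    split_ifs
    · exact (List.pairwise_cons.2 ⟨fun _ => lt_length_of_mem_positions, ih.pairwise⟩).sortedGT
    · exact ih

theorem eq_of_positions_eq {v w : List α} (h : ∀ x, positions x v = positions x w) : v = w := by
  rw [← List.reverse_inj]
  refine List.ext_getElem? fun k => Option.ext fun x => ?_
  rw [← mem_positions, h, mem_positions]

theorem positions_reverse_map_range (f : ℕ → α) (n : ℕ) {x : α} {A : List ℕ} (hA : A.SortedGT)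
    (h : ∀ k, k ∈ A ↔ k < n ∧ f k = x) : positions x ((List.range n).map f).reverse = A := by
  refine (sortedGT_positions _ _).eq_of_mem_iff hA fun k => ?_
  rw [mem_positions, h, List.reverse_reverse]
  grind

end Positions

section PermOfWord

/-- The permutation of `0, …, w.length - 1` made of three decreasing blocks, in which the letters
of `w`, read from the end, say to which block the values `0, 1, 2, …` belong. -/
def permOfWord (w : List (Fin 3)) : List ℕ :=
  positions 0 w ++ (positions 1 w ++ positions 2 w)

theorem permOfWord_perm_range (w : List (Fin 3)) : (permOfWord w).Perm (List.range w.length) := by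
  have hnodup (x : Fin 3) : (positions x w).Nodup := (sortedGT_positions x w).nodup
  refine (List.perm_ext_iff_of_nodup ?_ List.nodup_range).2 fun k => ?_
  · simp only [permOfWord, List.nodup_append', hnodup, List.disjoint_left, List.mem_append,
      mem_positions]
    grind
  · simp only [permOfWord, List.mem_append, mem_positions, List.mem_range]
    rw [← List.length_reverse]
    by_cases hk : k < w.reverse.length
    · simp only [List.getElem?_eq_getElem hk, Option.some_inj, hk, iff_true]
      generalize w.reverse[k] = x
      fin_cases x <;> decide
    · grind

theorem exists_positions_eq {n : ℕ} {A B C : List ℕ} (hA : A.SortedGT) (hB : B.SortedGT)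
    (hC : C.SortedGT) (h : (A ++ (B ++ C)).Perm (List.range n)) :
    ∃ w : List (Fin 3), w.length = n ∧
      positions 0 w = A ∧ positions 1 w = B ∧ positions 2 w = C := by
  have hmem (k : ℕ) : k ∈ A ∨ k ∈ B ∨ k ∈ C ↔ k < n := by
    simpa using h.mem_iff (a := k)
  have hnodup := h.nodup_iff.2 List.nodup_range
  simp only [List.nodup_append', List.disjoint_left, List.mem_append] at hnodup
  let f (k : ℕ) : Fin 3 := if k ∈ A then 0 else if k ∈ B then 1 else 2
  refine ⟨((List.range n).map f).reverse, by simp, positions_reverse_map_range f n hA ?_,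
    positions_reverse_map_range f n hB ?_, positions_reverse_map_range f n hC ?_⟩
  all_goals grind

end PermOfWord

section Automaton

/-- The states of an automaton that reads the values of two words `A` and `B` in increasing order
and recognises `Overlap A B`. Each value read so far has been prepended to `A` or to `B`: the state
records whether `A` has zero, one or many entries, whether `Ascends A B`, and whether
`Overlap A B`. -/
inductive OverlapState
  | zero
  | one
  | many
  | oneAscends
  | manyAscends
  | overlaps
  deriving DecidableEq

namespace OverlapState

/-- The transition when a value larger than all previous ones is prepended to the left word. -/
def consLeft : OverlapState → OverlapState
  | zero => one
  | one => many
  | many => many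
  | oneAscends => manyAscends
  | manyAscends => manyAscends
  | overlaps => overlaps

/-- The transition when a value larger than all previous ones is prepended to the right word. -/
def consRight : OverlapState → OverlapState
  | zero => zero
  | one => oneAscends
  | many => manyAscends
  | oneAscends => oneAscends
  | manyAscends => overlaps
  | overlaps => overlaps

open Classical in
/-- The state of the automaton after it has read `A` and `B`. -/
noncomputable def ofLists (A B : List ℕ) : OverlapState :=
  if Overlap A B then overlaps
  else if Ascends A B then if 1 < A.length then manyAscends else oneAscends
  else if 1 < A.length then many else if A = [] then zero else one

theorem ofLists_eq_overlaps_iff {A B : List ℕ} : ofLists A B = overlaps ↔ Overlap A B := by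
  grind [ofLists]

end OverlapState

variable {A B : List ℕ} {n : ℕ}

theorem ascends_cons_left (h : ∀ b ∈ B, b < n) : Ascends (n :: A) B ↔ Ascends A B := by
  rcases A.eq_nil_or_concat' with rfl | ⟨A, a, rfl⟩
  · refine iff_of_false ?_ not_ascends_nil_left
    rintro ⟨a, ha, b, hb, hab⟩
    obtain rfl : n = a := by simpa using ha
    exact hab.asymm (h b (List.mem_of_mem_head? hb))
  · exact ascends_append_left (A := [n]) (by simp)

theorem overlap_cons_left (h : ∀ b ∈ B, b < n) : Overlap (n :: A) B ↔ Overlap A B := by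
  rw [Overlap, Overlap, ascends_cons_left fun b hb => h b (List.mem_of_mem_tail hb)]
  refine and_congr_right fun hA => ?_
  rw [List.dropLast_cons_of_ne_nil hA.left_ne_nil, ascends_cons_left h]

theorem ascends_cons_right (h : ∀ a ∈ A, a < n) : Ascends A (n :: B) ↔ A ≠ [] := by
  refine ⟨Ascends.left_ne_nil, fun hA => ?_⟩
  exact ⟨_, List.getLast?_eq_some_getLast hA, n, rfl, h _ (List.getLast_mem hA)⟩

theorem overlap_cons_right (h : ∀ a ∈ A, a < n) :
    Overlap A (n :: B) ↔ Ascends A B ∧ 1 < A.length := by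
  rw [Overlap, List.tail_cons, ascends_cons_right fun a ha => h a (List.mem_of_mem_dropLast ha),
    ← List.length_pos_iff, List.length_dropLast, Nat.sub_pos_iff_lt]

namespace OverlapState

theorem ofLists_cons_left (h : ∀ b ∈ B, b < n) :
    ofLists (n :: A) B = consLeft (ofLists A B) := by
  have := overlap_cons_left h (A := A)
  have := ascends_cons_left h (A := A)
  grind [ofLists, consLeft, Ascends.left_ne_nil, List.length_eq_zero_iff]

theorem ofLists_cons_right (hB : B.SortedGT) (h : ∀ a ∈ A, a < n) :
    ofLists A (n :: B) = consRight (ofLists A B) := by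
  have hlen (hAB : Overlap A B) : 1 < A.length := by
    simpa [← List.length_pos_iff] using hAB.2.left_ne_nil
  have := overlap_cons_right h (B := B)
  have := ascends_cons_right h (B := B)
  grind [ofLists, consRight, Ascends.left_ne_nil, Overlap.ascends]

/-- The pair of automata for the pairs of words `(A, B)` and `(B, C)`, where the letter
`0`, `1` or `2` says that the next value belongs to `A`, `B` or `C`, respectively. -/
def step : Fin 3 → OverlapState × OverlapState → OverlapState × OverlapState
  | 0, (s, t) => (consLeft s, t)
  | 1, (s, t) => (consRight s, consLeft t)
  | 2, (s, t) => (s, consRight t)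

theorem foldr_step (w : List (Fin 3)) :
    w.foldr step (zero, zero) =
      (ofLists (positions 0 w) (positions 1 w), ofLists (positions 1 w) (positions 2 w)) := by
  induction w with
  | nil => simp [positions, ofLists, Overlap, not_ascends_nil_left]
  | cons x w ih =>
    have hlt (y : Fin 3) : ∀ k ∈ positions y w, k < w.length :=
      fun _ => lt_length_of_mem_positions
    rw [List.foldr_cons, ih]
    fin_cases x <;>
      simp [step, positions, ofLists_cons_left (hlt _),
        ofLists_cons_right (sortedGT_positions _ _) (hlt _)]

theorem foldr_step_eq_overlaps_iff {w : List (Fin 3)} :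
    w.foldr step (zero, zero) = (overlaps, overlaps) ↔
      Overlap (positions 0 w) (positions 1 w) ∧ Overlap (positions 1 w) (positions 2 w) := by
  rw [foldr_step, Prod.mk.injEq, ofLists_eq_overlaps_iff, ofLists_eq_overlaps_iff]

end OverlapState

end Automaton

section Counting

theorem card_words_succ {α : Type*} [Fintype α] (P : List α → Prop) (n : ℕ) :
    Nat.card {w : List α // w.length = n + 1 ∧ P w} =
      ∑ x, Nat.card {w : List α // w.length = n ∧ P (w ++ [x])} := by
  have (x : α) : Finite {w : List α // w.length = n ∧ P (w ++ [x])} :=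
    ((List.finite_length_eq α n).subset fun _ hw => hw.1).to_subtype
  rw [← Nat.card_sigma]
  refine (Nat.card_congr (Equiv.ofBijective
    (fun w => ⟨w.2.1 ++ [w.1], by simp [w.2.2.1], w.2.2.2⟩) ⟨?_, ?_⟩)).symm
  · rintro ⟨x, v, hv⟩ ⟨y, w, hw⟩ h
    obtain ⟨rfl, hxy⟩ := List.append_inj' (Subtype.ext_iff.1 h) rfl
    obtain rfl := List.singleton_injective hxy
    rfl
  · rintro ⟨w, hlen, hw⟩
    rcases w.eq_nil_or_concat' with rfl | ⟨v, x, rfl⟩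
    · simp at hlen
    · exact ⟨⟨x, v, by simpa using hlen, hw⟩, rfl⟩

namespace OverlapState

/-- The number of words of length `n` that take the pair of automata from the states `(s, t)` to
acceptance. -/
noncomputable def acceptCount (n : ℕ) (s t : OverlapState) : ℕ :=
  Nat.card {w : List (Fin 3) // w.length = n ∧ w.foldr step (s, t) = (overlaps, overlaps)}

theorem acceptCount_zero (s t : OverlapState) :
    acceptCount 0 s t = if s = overlaps ∧ t = overlaps then 1 else 0 := by
  split_ifs with h
  · refine Nat.card_eq_one_iff_unique.2 ⟨⟨?_⟩, ⟨[], by simpa using h⟩⟩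
    grind
  · refine Nat.card_eq_zero.2 (.inl ⟨?_⟩)
    grind

theorem acceptCount_succ (n : ℕ) (s t : OverlapState) :
    acceptCount (n + 1) s t = acceptCount n (consLeft s) t +
      acceptCount n (consRight s) (consLeft t) + acceptCount n s (consRight t) := by
  rw [acceptCount, card_words_succ, Fin.sum_univ_three]
  simp only [List.foldr_append, List.foldr_cons, List.foldr_nil, step, acceptCount]

/-- The closed form of the number of words of length `n` that do not take one of the two automata
from a given state to acceptance. -/
def rejectFormula (n : ℕ) : OverlapState → ℚ
  | zero => 2 ^ n * (2 - n / 4 + n ^ 2 / 4) - 1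
  | one => 2 ^ n * n + 1
  | many => 2 ^ n * (1 + n / 2)
  | oneAscends => 2 ^ n * (1 + n / 2)
  | manyAscends => 2 ^ n
  | overlaps => 0

/-- The closed form, for `3 ≤ n`, of the number of words of length `n` that take neither of the two
automata from the given states to acceptance. For `n ≤ 2` some of the values differ from it. -/
def jointRejectFormula (n : ℕ) : OverlapState → OverlapState → ℚ
  | zero, zero => 2 ^ n * (2 + n / 2) - 1 - 21 * n / 2 + 19 * n ^ 2 / 2 - 7 * n ^ 3 / 2 + n ^ 4 / 2
  | zero, one => 2 ^ n * 2 - 3 + 17 * n / 2 - 6 * n ^ 2 + 3 * n ^ 3 / 2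
  | zero, many => 2 + 3 * n - 2 * n ^ 2 + n ^ 3
  | zero, oneAscends => 2 ^ n * 2 - 2 + 2 * n - 3 * n ^ 2 / 2 + n ^ 3 / 2
  | zero, manyAscends => 2 - n + n ^ 2
  | one, zero => 2 ^ n * (1 + n / 2) - 1 + 2 * n - 3 * n ^ 2 / 2 + n ^ 3 / 2
  | one, one => 2 ^ n * 2 + 1 - 4 * n + 2 * n ^ 2
  | one, many => 2 * n ^ 2
  | one, oneAscends => 2 ^ n * 2 - 1 - n / 2 + n ^ 2 / 2
  | one, manyAscends => 2 * n
  | many, zero => 2 ^ n * (1 + n / 2)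
  | many, one => 2 ^ n * 2 - 1 - n / 2 + n ^ 2 / 2
  | many, many => 1 + n + n ^ 2
  | many, oneAscends => 2 ^ n * 2 - 1
  | many, manyAscends => 1 + n
  | oneAscends, zero => 2 ^ n * 2 - 2 + 2 * n - 3 * n ^ 2 / 2 + n ^ 3 / 2
  | oneAscends, one => 2 ^ n + 1 - 3 * n / 2 + 3 * n ^ 2 / 2
  | oneAscends, many => 1 + n + n ^ 2
  | oneAscends, oneAscends => 2 ^ n + n / 2 + n ^ 2 / 2
  | oneAscends, manyAscends => 1 + n
  | manyAscends, zero => 2 ^ n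
  | manyAscends, one => 2 ^ n
  | manyAscends, many => 1 + n
  | manyAscends, oneAscends => 2 ^ n
  | manyAscends, manyAscends => 1
  | overlaps, _ => 0
  | _, overlaps => 0

-- Inclusion–exclusion; the two tables solve the triangular recurrence `acceptCount_succ`.
theorem acceptCount_add_three (n : ℕ) (s t : OverlapState) :
    (acceptCount (n + 3) s t : ℚ) = 3 ^ (n + 3) - rejectFormula (n + 3) s -
      rejectFormula (n + 3) t + jointRejectFormula (n + 3) s t := by
  induction n generalizing s t with
  | zero =>
    cases s <;> cases t <;>
      simp only [zero_add, acceptCount_succ, acceptCount_zero, consLeft, consRight, rejectFormula,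
        jointRejectFormula, reduceCtorEq, and_true, and_false, if_true, if_false] <;> norm_num
  | succ n ih =>
    rw [add_right_comm, acceptCount_succ]
    push_cast
    rw [ih, ih, ih]
    cases s <;> cases t <;>
      simp only [consLeft, consRight, rejectFormula, jointRejectFormula] <;> push_cast <;> ring

end OverlapState

end Counting

section Bijection

theorem permOfWord_injOn :
    {w | Overlap (positions 0 w) (positions 1 w) ∧
      Overlap (positions 1 w) (positions 2 w)}.InjOn permOfWord := by
  intro v hv w hw h
  have splitBy_eq {u : List (Fin 3)} (hu : Overlap (positions 0 u) (positions 1 u) ∧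
      Overlap (positions 1 u) (positions 2 u)) :
      (permOfWord u).splitBy (· > ·) = [positions 0 u, positions 1 u, positions 2 u] :=
    splitBy_append_append (sortedGT_positions 0 u) (sortedGT_positions 1 u)
      (sortedGT_positions 2 u) (hu.1.ascends (sortedGT_positions 1 u))
      (hu.2.ascends (sortedGT_positions 2 u))
  have hruns := splitBy_eq hv
  rw [h, splitBy_eq hw] at hruns
  refine eq_of_positions_eq fun x => ?_
  fin_cases x <;> simp_all

theorem card_isMinimal_eq_card_words {d : ℕ} (hd : d ≠ 0) :
    Nat.card {l : List ℕ // l.Perm (List.range (d + 3)) ∧ IsMinimal d l} =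
      Nat.card {w : List (Fin 3) // w.length = d + 3 ∧
        Overlap (positions 0 w) (positions 1 w) ∧ Overlap (positions 1 w) (positions 2 w)} := by
  have permOfWord_mem {w : List (Fin 3)} (hlen : w.length = d + 3)
      (h₀₁ : Overlap (positions 0 w) (positions 1 w))
      (h₁₂ : Overlap (positions 1 w) (positions 2 w)) :
      (permOfWord w).Perm (List.range (d + 3)) ∧ IsMinimal d (permOfWord w) := by
    have hperm := hlen ▸ permOfWord_perm_range w
    exact ⟨hperm, isMinimal_append_append (hperm.length_eq.trans List.length_range)
      (sortedGT_positions 0 w) (sortedGT_positions 1 w) (sortedGT_positions 2 w) h₀₁ h₁₂⟩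
  refine (Nat.card_congr (Equiv.ofBijective
    (fun w => ⟨permOfWord w.1, permOfWord_mem w.2.1 w.2.2.1 w.2.2.2⟩) ⟨?_, ?_⟩)).symm
  · intro v w h
    exact Subtype.ext (permOfWord_injOn v.2.2 w.2.2 (Subtype.ext_iff.1 h))
  · rintro ⟨l, hperm, hmin⟩
    have hnodup : l.Nodup := hperm.nodup_iff.2 List.nodup_range
    obtain ⟨A, B, C, rfl, hA, hB, hC, hAB, hBC⟩ :=
      hmin.exists_runs hd hnodup (by simpa using hperm.length_eq)
    obtain ⟨w, hlen, rfl, rfl, rfl⟩ := exists_positions_eq hA hB hC hperm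
    exact ⟨⟨w, hlen, hAB, hBC⟩, rfl⟩

end Bijection

/-- The number of minimal permutations with `d` descents of length `d + 3` is
`3^(d+3) - (d²+4d+7) * 2^(d+2) + d⁴/2 + 5d³/2 + 5d² + 6d + 1`. -/
theorem card_minimal_length_add_three (d : ℕ) (hd : 3 ≤ d) :
    (Nat.card {l : List ℕ // l.Perm (List.range (d + 3)) ∧ IsMinimal d l} : ℚ) =
      3 ^ (d + 3) - ((d : ℚ) ^ 2 + 4 * (d : ℚ) + 7) * 2 ^ (d + 2) +
        (1 / 2) * (d : ℚ) ^ 4 + (5 / 2) * (d : ℚ) ^ 3 + 5 * (d : ℚ) ^ 2 +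
        6 * (d : ℚ) + 1 := by
  have hcount :
      Nat.card {l : List ℕ // l.Perm (List.range (d + 3)) ∧ IsMinimal d l} =
        OverlapState.acceptCount (d + 3) .zero .zero := by
    rw [card_isMinimal_eq_card_words (by lia), OverlapState.acceptCount]
    simp only [OverlapState.foldr_step_eq_overlaps_iff]
  rw [hcount, OverlapState.acceptCount_add_three]
  simp only [OverlapState.rejectFormula, OverlapState.jointRejectFormula]
  push_cast
  ring
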